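/- Let κ be an inaccessible cardinal and C ⊆ κ a closed unbounded set. Then for every perfect κ-tree p there is a perfect κ-tree q ⊆ p with C(q) ⊆ C. Hence the set D_C = {q ∈ Sacks(κ) : C(q) ⊆ C} is dense in Sacks(κ). -/

import Mathlib

open Set Cardinal

noncomputable section

/-- A node of the binary tree `2^{<κ}`: a binary sequence of ordinal length `len < κ`,
coded as a function on all ordinals that takes the value `false` from `len` onwards. -/
structure BNode (κ : Cardinal.{0}) : Type 1 where
  len : Ordinal.{0}
  len_lt : len < κ.ord
  val : Ordinal.{0} → Bool
  val_false : ∀ i, len ≤ i → val i = false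

namespace BNode

variable {κ : Cardinal.{0}}

/-- `s.Ext t` means that `t` extends `s`, i.e. `s ⊆ t` as partial functions
(`s` is an initial segment of `t`). -/
def Ext (s t : BNode κ) : Prop :=
  s.len ≤ t.len ∧ ∀ i, i < s.len → t.val i = s.val i

/-- `s.snoc b` is the concatenation `s⌢b`.  (When `κ` is an infinite cardinal the
`dite` always takes the first branch, since `κ.ord` is a limit ordinal.) -/
def snoc (s : BNode κ) (b : Bool) : BNode κ :=
  if h : s.len + 1 < κ.ord then
    { len := s.len + 1
      len_lt := h
      val := fun i => if i < s.len then s.val i else if i = s.len then b else false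
      val_false := by
        intro i hi
        have h1 : s.len < i :=
          lt_of_lt_of_le (by rw [Ordinal.add_one_eq_succ]; exact Order.lt_succ _) hi
        simp [not_lt_of_gt h1, h1.ne'] }
  else s

end BNode

/-- `C` is a closed unbounded subset of the ordinal `L`. -/
def IsClubIn (L : Ordinal.{0}) (C : Set Ordinal.{0}) : Prop :=
  (∀ c ∈ C, c < L) ∧
  (∀ o, o < L → o ≠ 0 → (∀ i, i < o → ∃ c ∈ C, i < c ∧ c < o) → o ∈ C) ∧
  (∀ i, i < L → ∃ c ∈ C, i < c)

/-- `s` splits in `p`: both `s⌢0` and `s⌢1` belong to `p`. -/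
def Splits {κ : Cardinal.{0}} (p : Set (BNode κ)) (s : BNode κ) : Prop :=
  s.snoc false ∈ p ∧ s.snoc true ∈ p

/-- `C` is a splitting club for `p`: a closed unbounded subset of `κ` such that a node
`s ∈ p` splits in `p` if and only if `length s ∈ C`. -/
def IsSplitClub {κ : Cardinal.{0}} (p : Set (BNode κ)) (C : Set Ordinal.{0}) : Prop :=
  IsClubIn κ.ord C ∧ ∀ s ∈ p, (Splits p s ↔ s.len ∈ C)

/-- `p ⊆ 2^{<κ}` is a perfect `κ`-tree:
(1) closed under initial segments;
(2) closed under unions of `⊆`-increasing chains of length `< κ` (the union being the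
unique node `u` extending every member of the chain and whose length is the supremum
of the lengths);
(3) every node has a splitting extension;
(4) there is a club `C ⊆ κ` such that a node of `p` splits iff its length lies in `C`. -/
def IsPerfectTree {κ : Cardinal.{0}} (p : Set (BNode κ)) : Prop :=
  (∀ t ∈ p, ∀ s : BNode κ, s.Ext t → s ∈ p) ∧
  (∀ η : Ordinal.{0}, η < κ.ord → ∀ f : Ordinal.{0} → BNode κ,
      (∀ α β, α < β → β < η → (f α).Ext (f β)) →
      (∀ α, α < η → f α ∈ p) →
      ∀ u : BNode κ, (∀ α, α < η → (f α).Ext u) →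
        (∀ i, i < u.len → ∃ α, α < η ∧ i < (f α).len) → u ∈ p) ∧
  (∀ s ∈ p, ∃ t ∈ p, s.Ext t ∧ Splits p t) ∧
  (∃ C : Set Ordinal.{0}, IsSplitClub p C)

/-- The canonical splitting club of `p`: the set of lengths of splitting nodes of `p`.
For a perfect `κ`-tree (with `κ` inaccessible) this coincides with the unique
splitting club `C(p)`. -/
def splitClub {κ : Cardinal.{0}} (p : Set (BNode κ)) : Set Ordinal.{0} :=
  {o | ∃ s ∈ p, s.len = o ∧ Splits p s}

/-- `Split_i(p)`: the nodes of `p` whose length is the `i`-th element of the increasing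
enumeration of the splitting club of `p`. -/
def SplitLev {κ : Cardinal.{0}} (p : Set (BNode κ)) (i : Ordinal.{0}) : Set (BNode κ) :=
  {s ∈ p | s.len = Ordinal.enumOrd (splitClub p) i}

/-- The thinning `p↾s = {t ∈ p : s ⊆ t or t ⊆ s}`. -/
def thinTree {κ : Cardinal.{0}} (p : Set (BNode κ)) (s : BNode κ) : Set (BNode κ) :=
  {t ∈ p | s.Ext t ∨ t.Ext s}

/-- A condition in `Sacks(κ,λ)`: a `λ`-indexed family of perfect `κ`-trees (coded as a
function on all ordinals which is the full tree `2^{<κ}` off `λ`) whose support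
(the set of coordinates where it is not the full tree) has cardinality at most `κ`. -/
def SacksCond (κ lam : Cardinal.{0}) (p : Ordinal.{0} → Set (BNode κ)) : Prop :=
  (∀ α, α < lam.ord → IsPerfectTree (p α)) ∧
  (∀ α, ¬ α < lam.ord → p α = Set.univ) ∧
  #{α : Ordinal.{0} | α < lam.ord ∧ p α ≠ Set.univ} ≤ Cardinal.lift.{1} κ

/-- The (coordinatewise) order on `Sacks(κ,λ)`. -/
def SacksLe {κ : Cardinal.{0}} (lam : Cardinal.{0}) (p q : Ordinal.{0} → Set (BNode κ)) : Prop :=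
  ∀ α, α < lam.ord → p α ⊆ q α

/-- The forcing `Sacks(κ,λ)` as a partial order. -/
def SacksProd (κ lam : Cardinal.{0}) : Type 1 :=
  {p : Ordinal.{0} → Set (BNode κ) // SacksCond κ lam p}

instance SacksProd.instPartialOrder (κ lam : Cardinal.{0}) : PartialOrder (SacksProd κ lam) where
  le p q := ∀ α, p.1 α ⊆ q.1 α
  le_refl p α := subset_rfl
  le_trans p q r h1 h2 α := (h1 α).trans (h2 α)
  le_antisymm p q h1 h2 := Subtype.ext (funext fun α => subset_antisymm (h1 α) (h2 α))

/-- A partial order is almost homogeneous if for any `p, q` there is an order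
automorphism `f` such that `f p` and `q` are compatible. -/
def AlmostHomogeneous (P : Type*) [Preorder P] : Prop :=
  ∀ p q : P, ∃ f : P ≃o P, ∃ r : P, r ≤ f p ∧ r ≤ q

/-- A condition in the Cohen forcing `Add(γ,λ)`: a partial function from `λ × γ` to `2`
(coded as a functional set of triples) of cardinality less than `γ`. -/
def CohenCond (γ lam : Cardinal.{0}) (s : Set (Ordinal.{0} × Ordinal.{0} × Bool)) : Prop :=
  (∀ x ∈ s, x.1 < lam.ord ∧ x.2.1 < γ.ord) ∧
  (∀ a b u v, (a, b, u) ∈ s → (a, b, v) ∈ s → u = v) ∧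
  #s < Cardinal.lift.{1} γ

/-- The Cohen forcing `Add(γ,λ)`, ordered by reverse inclusion. -/
def CohenPoset (γ lam : Cardinal.{0}) : Type 1 := {s // CohenCond γ lam s}

instance CohenPoset.instPartialOrder (γ lam : Cardinal.{0}) : PartialOrder (CohenPoset γ lam) where
  le p q := q.1 ⊆ p.1
  le_refl p := subset_rfl
  le_trans p q r h1 h2 := Set.Subset.trans h2 h1
  le_antisymm p q h1 h2 := Subtype.ext (subset_antisymm h2 h1)

/-- `q` is an `(S,a)`-thinning of `p`: on each coordinate `ξ ∈ S`, the tree `p ξ` is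
thinned below some node on its `a`-th splitting level, and `q` agrees with `p` off `S`. -/
def IsThinning {κ : Cardinal.{0}} (S : Set Ordinal.{0}) (a : Ordinal.{0})
    (p q : Ordinal.{0} → Set (BNode κ)) : Prop :=
  (∀ ξ, ξ ∉ S → q ξ = p ξ) ∧
  ∀ ξ ∈ S, ∃ s ∈ SplitLev (p ξ) a, q ξ = thinTree (p ξ) s

/-- `p` reduces `D`: for some `S ⊆ λ` of size `< κ` and some `a < κ`, every
`(S,a)`-thinning of `p` belongs to `D`. -/
def ReducesDense (κ lam : Cardinal.{0}) (p : SacksProd κ lam)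
    (D : Set (SacksProd κ lam)) : Prop :=
  ∃ S : Set Ordinal.{0}, S ⊆ Set.Iio lam.ord ∧ #S < Cardinal.lift.{1} κ ∧
    ∃ a : Ordinal.{0}, a < κ.ord ∧
      ∀ q : SacksProd κ lam, IsThinning S a p.1 q.1 → q ∈ D

/-!
Let `D = C(p)` and `E = C ∩ D`, again a club. Keep those nodes of `p` that take the value `0` at
every level in `D \ E`: at such a level a node has exactly one successor left, while elsewhere the
successors are those it had in `p`. So the subtree has no terminal nodes and splits exactly at the
levels in `E`. As it is still closed under unions of chains, Zorn's lemma produces extensions of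
every length, in particular extensions whose length lies in `E`, and these split.
-/

section Club

variable {L : Ordinal.{0}} {C D : Set Ordinal.{0}}

lemma IsClubIn.isClub_preimage (hC : IsClubIn L C) : IsClub ((↑) ⁻¹' C : Set (Iio L)) := by
  obtain ⟨hsub, hclosed, hunb⟩ := hC
  refine ⟨fun d hdC ⟨c₀, hc₀⟩ _ a ha => ?_, fun i => ?_⟩
  · by_cases had : a ∈ d
    · exact hdC had
    have lt_of_mem {c : Iio L} (hc : c ∈ d) : c < a := (ha.1 hc).lt_of_ne fun h => had (h ▸ hc)
    have ha0 : a.1 ≠ 0 := (zero_le.trans_lt (Subtype.coe_lt_coe.2 (lt_of_mem hc₀))).ne'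
    refine hclosed a a.2 ha0 fun i hi => ?_
    obtain ⟨c, hc, hic⟩ := (lt_isLUB_iff ha).1 (show (⟨i, hi.trans a.2⟩ : Iio L) < a from hi)
    exact ⟨c, hdC hc, hic, lt_of_mem hc⟩
  · obtain ⟨c, hc, hic⟩ := hunb i i.2
    exact ⟨⟨c, hsub c hc⟩, hc, hic.le⟩

lemma isClubIn_of_isClub (hL : Order.IsSuccPrelimit L) (hsub : C ⊆ Iio L)
    (hC : IsClub ((↑) ⁻¹' C : Set (Iio L))) : IsClubIn L C := by
  refine ⟨hsub, fun o ho h0 h => ?_, fun i hi => ?_⟩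
  · have hlub : IsLUB {c : Iio L | ↑c ∈ C ∧ ↑c < o} ⟨o, ho⟩ := by
      refine ⟨fun c hc => hc.2.le, fun b hb => le_of_not_gt fun hbo => ?_⟩
      obtain ⟨c, hc, hbc, hco⟩ := h b hbo
      exact hbc.not_ge (hb (a := ⟨c, hsub hc⟩) ⟨hc, hco⟩)
    refine hC.isLUB_mem (fun c hc => hc.1) ?_ hlub
    obtain ⟨c, hc, -, hco⟩ := h 0 (pos_of_ne_zero h0)
    exact ⟨⟨c, hsub hc⟩, hc, hco⟩
  · obtain ⟨c, hc, hic⟩ := hC.isCofinal ⟨Order.succ i, hL.succ_lt hi⟩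
    exact ⟨c, hc, Order.succ_le_iff.1 hic⟩

lemma IsClubIn.inter (hL : ℵ₀ < L.cof) (hC : IsClubIn L C) (hD : IsClubIn L D) :
    IsClubIn L (C ∩ D) := by
  have hlim : Order.IsSuccLimit L := Ordinal.one_lt_cof_iff.1 (one_lt_aleph0.trans hL)
  have hcof : Order.cof (Iio L) ≠ ℵ₀ := by
    rw [Ordinal.cof_Iio, ← Ordinal.lift_cof, Ne, lift_eq_aleph0]
    exact hL.ne'
  exact isClubIn_of_isClub hlim.isSuccPrelimit (fun c hc => hC.1 c hc.1)
    (hC.isClub_preimage.inter hcof hD.isClub_preimage)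

end Club

namespace BNode

variable {κ : Cardinal.{0}} {s t u : BNode κ} {α i : Ordinal.{0}}

/-- Nodes are preordered by extension. -/
instance : Preorder (BNode κ) where
  le := Ext
  le_refl _ := ⟨le_rfl, fun _ _ => rfl⟩
  le_trans _ _ _ hst htu :=
    ⟨hst.1.trans htu.1, fun i hi => (htu.2 i (hi.trans_le hst.1)).trans (hst.2 i hi)⟩

lemma le_of_le_of_len_le (hs : s ≤ u) (ht : t ≤ u) (hlen : s.len ≤ t.len) : s ≤ t :=
  ⟨hlen, fun i hi => (ht.2 i (hi.trans_le hlen)).symm.trans (hs.2 i hi)⟩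

/-- The initial segment of `s` of length `α`; it is `s` itself when `s.len ≤ α`. -/
def restrict (s : BNode κ) (α : Ordinal.{0}) : BNode κ where
  len := min α s.len
  len_lt := (min_le_right _ _).trans_lt s.len_lt
  val i := if i < α then s.val i else false
  val_false i hi := by
    split_ifs with h
    · exact s.val_false i ((min_le_iff.1 hi).resolve_left h.not_ge)
    · rfl

lemma restrict_le (s : BNode κ) (α : Ordinal.{0}) : s.restrict α ≤ s :=
  ⟨min_le_right _ _, fun _ hi => (if_pos (hi.trans_le (min_le_left _ _))).symm⟩

lemma restrict_len (h : α ≤ s.len) : (s.restrict α).len = α :=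
  min_eq_left h

lemma val_eq_of_isChain {S : Set (BNode κ)} (hS : IsChain (· ≤ ·) S) (hs : s ∈ S) (ht : t ∈ S)
    (his : i < s.len) (hit : i < t.len) : s.val i = t.val i := by
  obtain h | h := hS.total hs ht
  · exact (h.2 i his).symm
  · exact h.2 i hit

lemma exists_union_of_isChain {S : Set (BNode κ)} (hS : IsChain (· ≤ ·) S) {β : Ordinal.{0}}
    (hβ : β < κ.ord) (hSβ : ∀ t ∈ S, t.len ≤ β) :
    ∃ u : BNode κ, u.len ≤ β ∧ (∀ t ∈ S, t ≤ u) ∧ ∀ i < u.len, ∃ t ∈ S, i < t.len := by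
  classical
  have hbound : β ∈ upperBounds (len '' S) := forall_mem_image.2 hSβ
  have hsup : sSup (len '' S) ≤ β := csSup_le' hbound
  have len_le {t : BNode κ} (ht : t ∈ S) : t.len ≤ sSup (len '' S) :=
    le_csSup ⟨β, hbound⟩ (mem_image_of_mem len ht)
  let u : BNode κ :=
    { len := sSup (len '' S)
      len_lt := hsup.trans_lt hβ
      val := fun i => decide (∃ t ∈ S, i < t.len ∧ t.val i = true)
      val_false := fun i hi => decide_eq_false fun ⟨_, ht, hit, _⟩ =>
        (hit.trans_le (len_le ht)).not_ge hi }
  refine ⟨u, hsup, fun t ht => ⟨len_le ht, fun i hit => ?_⟩, fun i hi => ?_⟩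
  · rw [Bool.eq_iff_iff, decide_eq_true_iff]
    refine ⟨fun ⟨t', ht', hit', hval⟩ => ?_, fun hval => ⟨t, ht, hit, hval⟩⟩
    rwa [val_eq_of_isChain hS ht ht' hit hit']
  · simpa only [exists_mem_image] using (lt_csSup_iff' ⟨β, hbound⟩).1 hi

lemma snoc_len (hκ : ℵ₀ ≤ κ) (s : BNode κ) (b : Bool) : (s.snoc b).len = s.len + 1 := by
  have h : s.len + 1 < κ.ord := (isSuccLimit_ord hκ).succ_lt s.len_lt
  simp [snoc, h]

lemma snoc_val_of_lt (b : Bool) (hi : i < s.len) : (s.snoc b).val i = s.val i := by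
  unfold snoc
  split_ifs
  · exact if_pos hi
  · rfl

lemma snoc_val_len (hκ : ℵ₀ ≤ κ) (s : BNode κ) (b : Bool) : (s.snoc b).val s.len = b := by
  have h : s.len + 1 < κ.ord := (isSuccLimit_ord hκ).succ_lt s.len_lt
  simp [snoc, h]

lemma lt_snoc_len_iff (hκ : ℵ₀ ≤ κ) (b : Bool) : i < (s.snoc b).len ↔ i ≤ s.len := by
  rw [snoc_len hκ, Order.lt_add_one_iff]

lemma le_snoc (hκ : ℵ₀ ≤ κ) (s : BNode κ) (b : Bool) : s ≤ s.snoc b :=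
  ⟨((lt_snoc_len_iff hκ b).2 le_rfl).le, fun _ hi => snoc_val_of_lt b hi⟩

lemma snoc_le_of_lt (hκ : ℵ₀ ≤ κ) (hst : s ≤ t) (hlen : s.len < t.len) :
    s.snoc (t.val s.len) ≤ t := by
  refine ⟨by simpa only [snoc_len hκ, Order.add_one_le_iff] using hlen, fun i hi => ?_⟩
  obtain h | rfl := ((lt_snoc_len_iff hκ _).1 hi).lt_or_eq
  · rw [snoc_val_of_lt _ h, hst.2 i h]
  · rw [snoc_val_len hκ]

end BNode

section Tree

variable {κ : Cardinal.{0}} {p T : Set (BNode κ)} {A C D E : Set Ordinal.{0}} {s : BNode κ}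

/-- A set of nodes satisfying clauses (1) and (2) in the definition of a perfect tree. Closure under
unions of chains is expressed without indexing: a node belongs to `T` as soon as it is exhausted by
its initial segments in `T`. -/
structure IsClosedTree (T : Set (BNode κ)) : Prop where
  isLowerSet : IsLowerSet T
  mem_of_exhausted : ∀ u : BNode κ, (∀ i < u.len, ∃ t ∈ T, t ≤ u ∧ i < t.len) → u ∈ T

lemma IsPerfectTree.isClosedTree (hp : IsPerfectTree p) : IsClosedTree p where
  isLowerSet t s hst ht := hp.1 t ht s hst
  mem_of_exhausted u hu := by
    by_cases hmax : ∃ t ∈ p, t ≤ u ∧ u.len ≤ t.len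
    · obtain ⟨t, ht, htu, hlen⟩ := hmax
      exact hp.1 t ht u (BNode.le_of_le_of_len_le le_rfl htu hlen)
    push Not at hmax
    refine hp.2.1 u.len u.len_lt u.restrict (fun α β hαβ hβ => ?_) (fun α hα => ?_) u
      (fun α _ => u.restrict_le α) (fun i hi => ?_)
    · refine BNode.le_of_le_of_len_le (u.restrict_le α) (u.restrict_le β) ?_
      rw [BNode.restrict_len (hαβ.trans hβ).le, BNode.restrict_len hβ.le]
      exact hαβ.le
    · obtain ⟨t, ht, htu, hαt⟩ := hu α hα
      refine hp.1 t ht _ (BNode.le_of_le_of_len_le (u.restrict_le α) htu ?_)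
      rw [BNode.restrict_len hα.le]
      exact hαt.le
    · obtain ⟨t, ht, htu, hit⟩ := hu i hi
      refine ⟨t.len, hmax t ht htu, ?_⟩
      rwa [BNode.restrict_len htu.1]

lemma IsClosedTree.exists_le_len_eq (hκ : ℵ₀ ≤ κ) (hT : IsClosedTree T)
    (hsucc : ∀ t ∈ T, ∃ b, t.snoc b ∈ T) (hs : s ∈ T) {β : Ordinal.{0}} (hsβ : s.len ≤ β)
    (hβ : β < κ.ord) : ∃ t ∈ T, s ≤ t ∧ t.len = β := by
  obtain ⟨m, hsm, ⟨hmT, hmβ⟩, hmax⟩ :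
      ∃ m, s ≤ m ∧ Maximal (· ∈ {t | t ∈ T ∧ t.len ≤ β}) m := by
    refine zorn_le_nonempty₀ _ (fun S hST hS _ _ => ?_) s ⟨hs, hsβ⟩
    obtain ⟨u, huβ, hSu, hu⟩ := BNode.exists_union_of_isChain hS hβ fun t ht => (hST ht).2
    refine ⟨u, ⟨hT.mem_of_exhausted u fun i hi => ?_, huβ⟩, hSu⟩
    obtain ⟨t, ht, hit⟩ := hu i hi
    exact ⟨t, (hST ht).1, hSu t ht, hit⟩
  refine ⟨m, hmT, hsm, hmβ.eq_of_not_lt fun hlt => ?_⟩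
  obtain ⟨b, hb⟩ := hsucc m hmT
  have hlen : (m.snoc b).len ≤ β := by
    rwa [BNode.snoc_len hκ, Order.add_one_le_iff]
  exact ((BNode.lt_snoc_len_iff hκ b).2 le_rfl).not_ge (hmax ⟨hb, hlen⟩ (m.le_snoc hκ b)).1

lemma IsClosedTree.isPerfectTree (hκ : ℵ₀ ≤ κ) (hT : IsClosedTree T)
    (hsucc : ∀ t ∈ T, ∃ b, t.snoc b ∈ T) (hC : IsSplitClub T C) : IsPerfectTree T := by
  refine ⟨fun t ht s hst => hT.isLowerSet hst ht, fun η _ f _ hfT u hfu hu => ?_,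
    fun s hs => ?_, C, hC⟩
  · refine hT.mem_of_exhausted u fun i hi => ?_
    obtain ⟨α, hα, hiα⟩ := hu i hi
    exact ⟨f α, hfT α hα, hfu α hα, hiα⟩
  · obtain ⟨c, hc, hsc⟩ := hC.1.2.2 s.len s.len_lt
    obtain ⟨t, ht, hst, rfl⟩ := hT.exists_le_len_eq hκ hsucc hs hsc.le (hC.1.1 c hc)
    exact ⟨t, ht, hst, (hC.2 t ht).2 hc⟩

lemma IsPerfectTree.exists_snoc_mem (hκ : ℵ₀ ≤ κ) (hp : IsPerfectTree p) (hs : s ∈ p) :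
    ∃ b, s.snoc b ∈ p := by
  obtain ⟨t, -, hst, ht, -⟩ := hp.2.2.1 s hs
  have hlen : s.len < (t.snoc false).len := (BNode.lt_snoc_len_iff hκ _).2 hst.1
  exact ⟨_, hp.1 _ ht _ (BNode.snoc_le_of_lt hκ (le_trans hst (t.le_snoc hκ _)) hlen)⟩

/-- The subtree of the nodes of `p` that take the value `0` at every level in `A`. It is used to
remove the splitting of `p` at these levels. -/
def zeroOn (p : Set (BNode κ)) (A : Set Ordinal.{0}) : Set (BNode κ) :=
  {s ∈ p | ∀ i ∈ A, i < s.len → s.val i = false}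

lemma IsClosedTree.zeroOn (hT : IsClosedTree T) (A : Set Ordinal.{0}) :
    IsClosedTree (zeroOn T A) where
  isLowerSet t s hst ht := ⟨hT.isLowerSet hst ht.1, fun i hiA hi =>
    (hst.2 i hi).symm.trans (ht.2 i hiA (hi.trans_le hst.1))⟩
  mem_of_exhausted u hu := by
    refine ⟨hT.mem_of_exhausted u fun i hi => ?_, fun i hiA hi => ?_⟩
    · obtain ⟨t, ht, htu⟩ := hu i hi
      exact ⟨t, ht.1, htu⟩
    · obtain ⟨t, ht, htu, hit⟩ := hu i hi
      rw [htu.2 i hit, ht.2 i hiA hit]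

lemma snoc_mem_zeroOn_iff (hκ : ℵ₀ ≤ κ) (hs : s ∈ zeroOn p A) {b : Bool} :
    s.snoc b ∈ zeroOn p A ↔ s.snoc b ∈ p ∧ (s.len ∈ A → b = false) := by
  refine and_congr_right fun _ => ⟨fun h hsA => ?_, fun h i hiA hi => ?_⟩
  · simpa only [BNode.snoc_val_len hκ] using h s.len hsA ((BNode.lt_snoc_len_iff hκ b).2 le_rfl)
  · obtain hi | rfl := ((BNode.lt_snoc_len_iff hκ b).1 hi).lt_or_eq
    · rw [BNode.snoc_val_of_lt b hi, hs.2 i hiA hi]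
    · rw [BNode.snoc_val_len hκ, h hiA]

lemma splits_zeroOn_iff (hκ : ℵ₀ ≤ κ) (hs : s ∈ zeroOn p A) :
    Splits (zeroOn p A) s ↔ Splits p s ∧ s.len ∉ A := by
  simp only [Splits, snoc_mem_zeroOn_iff hκ hs]
  tauto

lemma IsSplitClub.zeroOn_diff (hκ : ℵ₀ ≤ κ) (hD : IsSplitClub p D) (hE : IsClubIn κ.ord E)
    (hED : E ⊆ D) : IsSplitClub (zeroOn p (D \ E)) E := by
  refine ⟨hE, fun s hs => ?_⟩
  rw [splits_zeroOn_iff hκ hs, hD.2 s hs.1, ← mem_sdiff, sdiff_sdiff_right_self,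
    inter_eq_right.2 hED]

lemma IsPerfectTree.exists_snoc_mem_zeroOn (hκ : ℵ₀ ≤ κ) (hp : IsPerfectTree p)
    (hD : IsSplitClub p D) (hAD : A ⊆ D) (hs : s ∈ zeroOn p A) :
    ∃ b, s.snoc b ∈ zeroOn p A := by
  simp only [snoc_mem_zeroOn_iff hκ hs]
  by_cases hsA : s.len ∈ A
  · have hsplit : Splits p s := (hD.2 s hs.1).2 (hAD hsA)
    exact ⟨false, hsplit.1, fun _ => rfl⟩
  · obtain ⟨b, hb⟩ := hp.exists_snoc_mem hκ hs.1
    exact ⟨b, hb, fun h => absurd h hsA⟩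

lemma IsPerfectTree.zeroOn_diff (hκ : ℵ₀ ≤ κ) (hp : IsPerfectTree p) (hD : IsSplitClub p D)
    (hE : IsClubIn κ.ord E) (hED : E ⊆ D) : IsPerfectTree (zeroOn p (D \ E)) :=
  (hp.isClosedTree.zeroOn _).isPerfectTree hκ
    (fun _ hs => hp.exists_snoc_mem_zeroOn hκ hD sdiff_subset hs) (hD.zeroOn_diff hκ hE hED)

end Tree

theorem sacks_dense_splitClub_subset_general (κ : Cardinal.{0}) (hκ : ℵ₀ < κ.ord.cof)
    (C : Set Ordinal.{0}) (hC : IsClubIn κ.ord C)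
    (p : Set (BNode κ)) (hp : IsPerfectTree p) :
    ∃ q : Set (BNode κ), IsPerfectTree q ∧ q ⊆ p ∧
      ∃ Cq : Set Ordinal.{0}, IsSplitClub q Cq ∧ Cq ⊆ C := by
  have hω : ℵ₀ ≤ κ := hκ.le.trans (Ordinal.cof_ord_le κ)
  obtain ⟨D, hD⟩ := hp.2.2.2
  have hE : IsClubIn κ.ord (C ∩ D) := hC.inter hκ hD.1
  exact ⟨zeroOn p (D \ (C ∩ D)), hp.zeroOn_diff hω hD hE inter_subset_right, fun _ hs => hs.1,
    C ∩ D, hD.zeroOn_diff hω hE inter_subset_right, inter_subset_left⟩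

/-- For every club `C ⊆ κ` and every perfect `κ`-tree `p` there is a
perfect `κ`-tree `q ⊆ p` with `C(q) ⊆ C`.  Hence `D_C = {q : C(q) ⊆ C}` is dense in
`Sacks(κ)`. -/
theorem sacks_dense_splitClub_subset (κ : Cardinal.{0}) (hκ : κ.IsInaccessible)
    (C : Set Ordinal.{0}) (hC : IsClubIn κ.ord C)
    (p : Set (BNode κ)) (hp : IsPerfectTree p) :
    ∃ q : Set (BNode κ), IsPerfectTree q ∧ q ⊆ p ∧
      ∃ Cq : Set Ordinal.{0}, IsSplitClub q Cq ∧ Cq ⊆ C := by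
  exact sacks_dense_splitClub_subset_general κ
    (hκ.isRegular.cof_ord.symm ▸ hκ.aleph0_lt) C hC p hp
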